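/- Let C_n = {v ∈ S_{2n} : v(2n+1-i) = 2n+1-v(i) for all i}, regarded as a Coxeter group with simple generators c_0 = s_n (transposing n and n+1) and c_i = s_{n-i}s_{n+i} for 1 ≤ i ≤ n-1, and let ℓ_C denote word length with respect to {c_0,...,c_{n-1}}. Let v_□ ∈ C_n be the permutation with v_□(i) = n+1-i for i ≤ n and v_□(i) = 3n+1-i for i > n. Then for v ∈ C_n, there exist u_l, u_r ∈ C_n with v = u_l · v_□ · u_r and ℓ_C(v) = ℓ_C(u_l) + ℓ_C(v_□) + ℓ_C(u_r) if and only if v is 123-avoiding as an element of S_{2n}. -/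

import Mathlib

namespace TypeC

/-- weight of a pair: symmetric pairs count twice -/
def wt {N : ℕ} (i j : Fin N) : ℕ := if j = Fin.rev i then 2 else 1

/-- weighted number of pairs ordered by `f` and reversed by `g` -/
def D {N : ℕ} (f g : Equiv.Perm (Fin N)) : ℕ :=
  ∑ i, ∑ j, if f i < f j ∧ g j < g i then wt i j else 0

/-- weighted number of pairs whose order changes twice -/
def E {N : ℕ} (f g h : Equiv.Perm (Fin N)) : ℕ :=
  ∑ i, ∑ j, if (f i < f j ∧ g j < g i ∧ h i < h j) ∨ (f j < f i ∧ g i < g j ∧ h j < h i)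
    then wt i j else 0

/-- symmetric permutations -/
def Sy {N : ℕ} (u : Equiv.Perm (Fin N)) : Prop := ∀ i, u (Fin.rev i) = Fin.rev (u i)

theorem Sy.mul {N : ℕ} {u w : Equiv.Perm (Fin N)} (hu : Sy u) (hw : Sy w) : Sy (u * w) := by
  intro i
  simp only [Equiv.Perm.mul_apply]
  rw [hw, hu]

theorem Sy.inv {N : ℕ} {u : Equiv.Perm (Fin N)} (hu : Sy u) : Sy u⁻¹ := by
  intro i
  rw [Equiv.Perm.inv_eq_iff_eq, hu]
  simp

theorem Sy.one {N : ℕ} : Sy (1 : Equiv.Perm (Fin N)) := by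
  intro i; simp

theorem D_add {N : ℕ} (f g h : Equiv.Perm (Fin N)) : D f g + D g h = D f h + E f g h := by
  unfold D E
  simp only [← Finset.sum_add_distrib]
  refine Finset.sum_congr rfl fun i _ => Finset.sum_congr rfl fun j _ => ?_
  by_cases hij : i = j
  · subst hij; simp
  have h1 : f i ≠ f j := fun e => hij (f.injective e)
  have h2 : g i ≠ g j := fun e => hij (g.injective e)
  have h3 : h i ≠ h j := fun e => hij (h.injective e)
  rcases lt_or_gt_of_ne h1 with h1 | h1 <;> rcases lt_or_gt_of_ne h2 with h2 | h2 <;>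
    rcases lt_or_gt_of_ne h3 with h3 | h3 <;>
    simp [h1, h2, h3, not_lt_of_gt]

theorem D_comp {N : ℕ} (f g w : Equiv.Perm (Fin N)) (hw : Sy w) : D (f * w) (g * w) = D f g := by
  unfold D
  symm
  rw [← Equiv.sum_comp w]
  refine Finset.sum_congr rfl fun i _ => ?_
  rw [← Equiv.sum_comp w]
  refine Finset.sum_congr rfl fun j _ => ?_
  have : wt (w i) (w j) = wt i j := by
    unfold wt
    rw [← hw i]
    simp only [w.injective.eq_iff]
  rw [this]
  rfl

/-- twice the length -/
def L {N : ℕ} (u : Equiv.Perm (Fin N)) : ℕ := D 1 u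

theorem L_mul {N : ℕ} (u w : Equiv.Perm (Fin N)) (hw : Sy w) :
    L u + L w = L (u * w) + E 1 w (u * w) := by
  have h := D_add 1 w (u * w)
  have h2 := D_comp 1 u w hw
  rw [one_mul] at h2
  unfold L
  omega

theorem wt_pos {N : ℕ} (i j : Fin N) : 0 < wt i j := by
  unfold wt; split <;> omega

theorem E_zero {N : ℕ} (w v : Equiv.Perm (Fin N)) :
    E 1 w v = 0 ↔ ∀ i j, i < j → w j < w i → v j < v i := by
  unfold E
  constructor
  · intro h i j hij hw
    simp only [Finset.sum_eq_zero_iff, Finset.mem_univ, true_imp_iff] at h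
    have h1 := h i j
    have h2 := wt_pos i j
    by_contra hv
    have hne : v i ≠ v j := fun e => hij.ne (v.injective e)
    have : v i < v j := lt_of_le_of_ne (not_lt.1 hv) hne
    simp [hij, hw, this] at h1
    omega
  · intro h
    refine Finset.sum_eq_zero fun i _ => Finset.sum_eq_zero fun j _ => ?_
    rw [if_neg]
    rintro (⟨a, b, c⟩ | ⟨a, b, c⟩)
    · exact absurd (h i j a b) (not_lt_of_gt c)
    · exact absurd (h j i a b) (not_lt_of_gt c)

theorem L_add_iff {N : ℕ} (u w : Equiv.Perm (Fin N)) (hw : Sy w) :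
    L (u * w) = L u + L w ↔ ∀ i j, i < j → w j < w i → (u * w) j < (u * w) i := by
  rw [← E_zero]
  have := L_mul u w hw
  omega

theorem L_le {N : ℕ} (u w : Equiv.Perm (Fin N)) (hw : Sy w) : L (u * w) ≤ L u + L w := by
  have := L_mul u w hw
  omega

theorem L_one {N : ℕ} : L (1 : Equiv.Perm (Fin N)) = 0 := by
  unfold L D
  refine Finset.sum_eq_zero fun i _ => Finset.sum_eq_zero fun j _ => ?_
  rw [if_neg]
  rintro ⟨a, b⟩
  exact absurd a (not_lt_of_gt b)

section gens

variable {n : ℕ} {c : ℕ → Equiv.Perm (Fin (2 * n))}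

/-- value description of the generators -/
def IsGen (n : ℕ) (c : ℕ → Equiv.Perm (Fin (2 * n))) : Prop :=
  ∀ i < n, ∀ x : Fin (2 * n), ((c i x : Fin (2 * n)) : ℕ) =
    if (x : ℕ) = n - i - 1 then n - i else if (x : ℕ) = n - i then n - i - 1 else
    if (x : ℕ) = n + i - 1 then n + i else if (x : ℕ) = n + i then n + i - 1 else x

theorem isGen (hn : 1 ≤ n)
    (hc0 : ∀ (p : n - 1 < 2 * n) (q : n < 2 * n), c 0 = Equiv.swap ⟨n - 1, p⟩ ⟨n, q⟩)
    (hci : ∀ i, 1 ≤ i → i < n → ∀ (p : n - i - 1 < 2 * n) (q : n - i < 2 * n)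
      (p' : n + i - 1 < 2 * n) (q' : n + i < 2 * n),
      c i = Equiv.swap ⟨n - i - 1, p⟩ ⟨n - i, q⟩ *
            Equiv.swap ⟨n + i - 1, p'⟩ ⟨n + i, q'⟩) : IsGen n c := by
  intro i hi x
  rcases Nat.eq_zero_or_pos i with rfl | h
  · rw [hc0 (by omega) (by omega), Equiv.swap_apply_def]
    clear hc0 hci
    simp only [Fin.ext_iff, apply_ite Fin.val]
    split_ifs <;> omega
  · rw [hci i h hi (by omega) (by omega) (by omega) (by omega), Equiv.Perm.mul_apply, Equiv.swap_apply_def, Equiv.swap_apply_def]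
    clear hc0 hci
    simp only [Fin.ext_iff, apply_ite Fin.val]
    split_ifs <;> omega

theorem gen_sy (hc : IsGen n c) {i : ℕ} (hi : i < n) : Sy (c i) := by
  intro x
  ext
  rw [Fin.val_rev, hc i hi, hc i hi, Fin.val_rev]
  have := x.2
  split_ifs <;> omega

theorem gen_sq (hc : IsGen n c) {i : ℕ} (hi : i < n) : c i * c i = 1 := by
  ext x
  rw [Equiv.Perm.mul_apply, hc i hi, hc i hi]
  simp only [Equiv.Perm.one_apply]
  split_ifs <;> omega

theorem gen_inv (hc : IsGen n c) {i : ℕ} (hi : i < n) (a b : Fin (2 * n)) :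
    (a < b ∧ c i b < c i a) ↔ (((a : ℕ) = n - i - 1 ∧ (b : ℕ) = n - i) ∨
      ((a : ℕ) = n + i - 1 ∧ (b : ℕ) = n + i)) := by
  rw [Fin.lt_def, Fin.lt_def, hc i hi, hc i hi]
  constructor
  · rintro ⟨h1, h2⟩
    split_ifs at h2 <;> omega
  · rintro (⟨h1, h2⟩ | ⟨h1, h2⟩)
    · rw [h1, h2]; split_ifs <;> omega
    · rw [h1, h2]; split_ifs <;> omega

theorem gen_L (hc : IsGen n c) {i : ℕ} (hi : i < n) : L (c i) = 2 := by
  unfold L D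
  simp only [Equiv.Perm.one_apply, gen_inv hc hi]
  rw [← Finset.sum_product', ← Finset.sum_filter]
  let p : Fin (2 * n) × Fin (2 * n) := (⟨n - i - 1, by omega⟩, ⟨n - i, by omega⟩)
  let q : Fin (2 * n) × Fin (2 * n) := (⟨n + i - 1, by omega⟩, ⟨n + i, by omega⟩)
  have : (Finset.univ ×ˢ Finset.univ : Finset (Fin (2 * n) × Fin (2 * n))).filter
    (fun x => ((x.1 : ℕ) = n - i - 1 ∧ (x.2 : ℕ) = n - i) ∨
      ((x.1 : ℕ) = n + i - 1 ∧ (x.2 : ℕ) = n + i)) = {p, q} := by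
    ext ⟨a, b⟩
    simp [p, q, Fin.ext_iff]
  rw [this]
  rcases Nat.eq_zero_or_pos i with rfl | h
  · have hpq : p = q := by simp [p, q]
    rw [hpq]
    simp [wt, q, Fin.ext_iff, Fin.val_rev]
    omega
  · have hpq : p ≠ q := by
      simp [p, q]; omega
    rw [Finset.sum_pair hpq]
    simp only [wt, p, q, Fin.ext_iff, Fin.val_rev]
    rw [if_neg (by omega), if_neg (by omega)]

theorem eq_one_of_no_desc {N : ℕ} (u : Equiv.Perm (Fin N))
    (h : ∀ a b : Fin N, (b : ℕ) = a + 1 → u a < u b) : u = 1 := by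
  have hm : StrictMono u := by
    have key : ∀ d : ℕ, ∀ a b : Fin N, (b : ℕ) = a + d + 1 → u a < u b := by
      intro d
      induction d with
      | zero => intro a b hab; exact h a b (by omega)
      | succ d ih =>
        intro a b hab
        have hb := b.2
        exact lt_trans (ih a ⟨a + d + 1, by omega⟩ rfl) (h ⟨a + d + 1, by omega⟩ b (by simp; omega))
    intro a b hab
    exact key (b - a - 1) a b (by rw [Fin.lt_def] at hab; omega)
  have : (u : Fin N → Fin N) = id := by
    apply (StrictMono.range_inj hm strictMono_id).1
    simp [u.surjective.range_eq]
  ext x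
  simp [this]

theorem exists_desc (hc : IsGen n c) (u : Equiv.Perm (Fin (2 * n))) (hu : Sy u) (h1 : u ≠ 1) :
    ∃ i < n, L u = L (u * c i) + 2 := by
  have : ∃ i < n, ∀ a b : Fin (2 * n), (a : ℕ) = n - i - 1 → (b : ℕ) = n - i → u b < u a := by
    by_contra hcon
    push Not at hcon
    apply h1
    have low : ∀ a b : Fin (2 * n), (a : ℕ) < n → (b : ℕ) = a + 1 → u a < u b := by
      intro a b ha hb
      obtain ⟨a', b', h1, h2, h3⟩ := hcon (n - 1 - a) (by omega)
      have ea : a' = a := by ext; omega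
      have eb : b' = b := by ext; omega
      subst ea eb
      refine lt_of_le_of_ne h3 fun e => ?_
      have := u.injective e
      rw [this] at hb; omega
    apply eq_one_of_no_desc
    intro a b hb
    rcases lt_or_ge (a : ℕ) n with ha | ha
    · exact low a b ha hb
    · have hb2 := b.2
      have := low (Fin.rev b) (Fin.rev a) (by rw [Fin.val_rev]; omega)
        (by rw [Fin.val_rev, Fin.val_rev]; omega)
      rw [hu, hu, Fin.rev_lt_rev] at this
      exact this
  obtain ⟨i, hi, hd⟩ := this
  refine ⟨i, hi, ?_⟩
  have hs := gen_sy hc hi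
  have e : u * c i * c i = u := by rw [mul_assoc, gen_sq hc hi, mul_one]
  have := (L_add_iff (u * c i) (c i) hs).2 ?_
  · rw [e, gen_L hc hi] at this; exact this
  · rw [e]
    intro a b hab hcab
    rcases (gen_inv hc hi a b).1 ⟨hab, hcab⟩ with ⟨h1, h2⟩ | ⟨h1, h2⟩
    · exact hd a b h1 h2
    · have := hd (Fin.rev b) (Fin.rev a) (by rw [Fin.val_rev]; omega) (by rw [Fin.val_rev]; omega)
      rw [hu, hu, Fin.rev_lt_rev] at this
      exact this

theorem exists_word (hc : IsGen n c) (m : ℕ) : ∀ u : Equiv.Perm (Fin (2 * n)), Sy u → L u ≤ m →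
    ∃ l : List (Equiv.Perm (Fin (2 * n))), 2 * l.length = L u ∧ (∀ x ∈ l, ∃ i < n, x = c i) ∧
      l.prod = u := by
  induction m with
  | zero =>
    intro u hu hm
    by_cases h : u = 1
    · subst h; exact ⟨[], by simp [L_one], by simp, by simp⟩
    · obtain ⟨i, hi, h2⟩ := exists_desc hc u hu h
      omega
  | succ m ih =>
    intro u hu hm
    by_cases h : u = 1
    · subst h; exact ⟨[], by simp [L_one], by simp, by simp⟩
    · obtain ⟨i, hi, h2⟩ := exists_desc hc u hu h
      obtain ⟨l, h3, h4, h5⟩ := ih (u * c i) (hu.mul (gen_sy hc hi)) (by omega)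
      refine ⟨l ++ [c i], by simp; omega, ?_, ?_⟩
      · intro x hx
        rcases List.mem_append.1 hx with hx | hx
        · exact h4 x hx
        · exact ⟨i, hi, by simpa using hx⟩
      · simp [h5, mul_assoc, gen_sq hc hi]

theorem word_le (hc : IsGen n c) (l : List (Equiv.Perm (Fin (2 * n))))
    (hl : ∀ x ∈ l, ∃ i < n, x = c i) : Sy l.prod ∧ L l.prod ≤ 2 * l.length := by
  induction l with
  | nil => simp [L_one, Sy.one]
  | cons a l ih =>
    obtain ⟨i, hi, rfl⟩ := hl a (by simp)
    obtain ⟨h1, h2⟩ := ih fun x hx => hl x (by simp [hx])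
    rw [List.prod_cons, List.length_cons]
    refine ⟨(gen_sy hc hi).mul h1, ?_⟩
    have := L_le (c i) l.prod h1
    rw [gen_L hc hi] at this
    omega

theorem len_eq (hc : IsGen n c) (u : Equiv.Perm (Fin (2 * n))) (hu : Sy u) :
    2 * sInf {m | ∃ l : List (Equiv.Perm (Fin (2 * n))),
        l.length = m ∧ (∀ x ∈ l, ∃ i < n, x = c i) ∧ l.prod = u} = L u := by
  obtain ⟨l, h1, h2, h3⟩ := exists_word hc _ u hu le_rfl
  have hmem : l.length ∈ {m | ∃ l : List (Equiv.Perm (Fin (2 * n))),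
        l.length = m ∧ (∀ x ∈ l, ∃ i < n, x = c i) ∧ l.prod = u} := ⟨l, rfl, h2, h3⟩
  have hle := Nat.sInf_le hmem
  obtain ⟨l', h1', h2', h3'⟩ := Nat.sInf_mem ⟨_, hmem⟩
  have := (word_le hc l' h2').2
  rw [h3'] at this
  omega

end gens

/-- the shuffle order attached to a set `A` of positions -/
def Ord {N : ℕ} (A : Fin N → Prop) (i j : Fin N) : Prop :=
  (A i ∧ ¬ A j) ∨ ((A i ↔ A j) ∧ i < j)

open Classical in
theorem exists_shuffle {n : ℕ} (A : Fin (2 * n) → Prop) (hA : ∀ i, A (Fin.rev i) ↔ ¬ A i) :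
    ∃ r : Equiv.Perm (Fin (2 * n)), Sy r ∧ (∀ i j, r i < r j ↔ Ord A i j) ∧
      ∀ i, (r i : ℕ) < n ↔ A i := by
  have tr : ∀ i j k, Ord A i j → Ord A j k → Ord A i k := by
    intro i j k h1 h2
    unfold Ord at *
    rcases h1 with h1 | ⟨h1, h1'⟩ <;> rcases h2 with h2 | ⟨h2, h2'⟩
    · tauto
    · tauto
    · tauto
    · exact Or.inr ⟨h1.trans h2, h1'.trans h2'⟩
  have ir : ∀ i, ¬ Ord A i i := by
    intro i h
    unfold Ord at h
    rcases h with h | h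
    · tauto
    · exact lt_irrefl _ h.2
  have tot : ∀ i j, i ≠ j → Ord A i j ∨ Ord A j i := by
    intro i j h
    unfold Ord
    rcases lt_or_gt_of_ne h with h | h <;> tauto
  have rv : ∀ i j, Ord A (Fin.rev i) (Fin.rev j) ↔ Ord A j i := by
    intro i j
    unfold Ord
    rw [hA, hA, Fin.rev_lt_rev]
    tauto
  let s : Fin (2 * n) → Finset (Fin (2 * n)) := fun i => Finset.univ.filter fun j => Ord A j i
  have hs : ∀ i, (s i).card < 2 * n := by
    intro i
    have : (s i).card < (Finset.univ : Finset (Fin (2 * n))).card := by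
      apply Finset.card_lt_card
      rw [Finset.ssubset_univ_iff]
      intro h
      have : i ∈ s i := by rw [h]; simp
      simp only [s, Finset.mem_filter] at this
      exact ir i this.2
    simpa using this
  let f : Fin (2 * n) → Fin (2 * n) := fun i => ⟨(s i).card, hs i⟩
  have mono : ∀ i j, Ord A i j → f i < f j := by
    intro i j h
    rw [Fin.lt_def]
    change (s i).card < (s j).card
    apply Finset.card_lt_card
    rw [Finset.ssubset_iff_of_subset]
    · exact ⟨i, by simpa [s] using h, by simpa [s] using ir i⟩
    · intro k hk
      simp only [s, Finset.mem_filter, Finset.mem_univ, true_and] at *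
      exact tr _ _ _ hk h
  have inj : Function.Injective f := by
    intro i j h
    by_contra hne
    rcases tot i j hne with h' | h'
    · exact absurd h (mono _ _ h').ne
    · exact absurd h (mono _ _ h').ne'
  let r : Equiv.Perm (Fin (2 * n)) := Equiv.ofBijective f (Finite.injective_iff_bijective.1 inj)
  have hr : ∀ i, r i = f i := fun i => rfl
  have hlt : ∀ i j, r i < r j ↔ Ord A i j := by
    intro i j
    rw [hr, hr]
    refine ⟨fun h => ?_, mono i j⟩
    by_contra hno
    have hne : i ≠ j := by rintro rfl; exact lt_irrefl _ h
    rcases tot i j hne with h' | h'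
    · exact hno h'
    · exact lt_asymm h (mono _ _ h')
  have hsy : Sy r := by
    -- `rev ∘ r ∘ rev ∘ r⁻¹` is monotone
    have : ∀ i j, r i < r j ↔ Fin.rev (r (Fin.rev i)) < Fin.rev (r (Fin.rev j)) := by
      intro i j
      rw [Fin.rev_lt_rev, hlt, hlt, rv]
    let g : Equiv.Perm (Fin (2 * n)) := r⁻¹.trans (Fin.revPerm.trans (r.trans Fin.revPerm))
    have hg : ∀ i, g (r i) = Fin.rev (r (Fin.rev i)) := by
      intro i; simp [g]
    have g1 : g = 1 := by
      apply eq_one_of_no_desc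
      intro a b hab
      obtain ⟨a, rfl⟩ := r.surjective a
      obtain ⟨b, rfl⟩ := r.surjective b
      rw [hg, hg, ← this, Fin.lt_def]
      omega
    intro i
    have := hg i
    rw [g1, Equiv.Perm.one_apply] at this
    rw [this, Fin.rev_rev]
  refine ⟨r, hsy, hlt, fun i => ?_⟩
  constructor
  · intro h
    by_contra hA'
    have h1 : Ord A (Fin.rev i) i := Or.inl ⟨(hA i).2 hA', hA'⟩
    rw [← hlt, hsy, Fin.lt_def, Fin.val_rev] at h1
    omega
  · intro h
    have h1 : Ord A i (Fin.rev i) := Or.inl ⟨h, fun h' => (hA i).1 h' h⟩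
    rw [← hlt, hsy, Fin.lt_def, Fin.val_rev] at h1
    omega

theorem aux_arith {n a b : ℕ} (h1 : a < n) (h2 : ¬ b < n) (h3 : b < 2 * n)
    (h : 3 * n - 1 - b < n - 1 - a) : False := by omega

theorem main {n : ℕ} (vsq : Equiv.Perm (Fin (2 * n)))
    (hvsq : ∀ i : Fin (2 * n), ((vsq i : ℕ)) =
        if (i : ℕ) < n then n - 1 - (i : ℕ) else 3 * n - 1 - (i : ℕ))
    (v : Equiv.Perm (Fin (2 * n))) (hv : Sy v) :
    (∃ ul ur : Equiv.Perm (Fin (2 * n)), Sy ul ∧ Sy ur ∧ v = ul * vsq * ur ∧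
        L v = L ul + L vsq + L ur) ↔
      ¬ ∃ i j k : Fin (2 * n), i < j ∧ j < k ∧ v i < v j ∧ v j < v k := by
  have hsq : Sy vsq := by
    intro i
    ext
    have := i.2
    rw [Fin.val_rev, hvsq, hvsq, Fin.val_rev]
    split_ifs <;> omega
  constructor
  · rintro ⟨ul, ur, hl, hr, rfl, hL⟩ ⟨i, j, k, hij, hjk, h1, h2⟩
    have a1 := L_le ul (vsq * ur) (hsq.mul hr)
    have a2 := L_le vsq ur hr
    rw [mul_assoc] at hL h1 h2
    have b1 := (L_add_iff ul (vsq * ur) (hsq.mul hr)).1 (by omega)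
    have b2 := (L_add_iff vsq ur hr).1 (by omega)
    have key : ∀ a b, a < b → (ul * (vsq * ur)) a < (ul * (vsq * ur)) b →
        vsq (ur a) < vsq (ur b) ∧ ur a < ur b := by
      intro a b hab hlt
      have s1 : vsq (ur a) < vsq (ur b) := by
        rcases lt_trichotomy (vsq (ur a)) (vsq (ur b)) with h | h | h
        · exact h
        · exact absurd (ur.injective (vsq.injective h)) hab.ne
        · exact absurd (b1 a b hab h) (not_lt_of_gt hlt)
      refine ⟨s1, ?_⟩
      rcases lt_trichotomy (ur a) (ur b) with h | h | h
      · exact h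
      · exact absurd (ur.injective h) hab.ne
      · exact absurd (b2 a b hab h) (not_lt_of_gt s1)
    obtain ⟨p1, p2⟩ := key i j hij h1
    obtain ⟨q1, q2⟩ := key j k hjk h2
    rw [Fin.lt_def] at p1 p2 q1 q2
    rw [hvsq, hvsq] at p1 q1
    split_ifs at p1 q1 <;> omega
  · intro hav
    let up : Fin (2 * n) → Prop := fun i => ∃ j, i < j ∧ v i < v j
    let dn : Fin (2 * n) → Prop := fun i => ∃ j, j < i ∧ v j < v i
    have updn : ∀ i, up i → ¬ dn i := by
      rintro i ⟨k, h1, h2⟩ ⟨j, h3, h4⟩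
      exact hav ⟨j, i, k, h3, h1, h4, h2⟩
    have uprev : ∀ i, up (Fin.rev i) ↔ dn i := by
      intro i
      constructor
      · rintro ⟨j, h1, h2⟩
        refine ⟨Fin.rev j, by rwa [← Fin.rev_lt_rev, Fin.rev_rev], ?_⟩
        rw [hv] at h2 ⊢
        rwa [← Fin.rev_lt_rev, Fin.rev_rev]
      · rintro ⟨j, h1, h2⟩
        refine ⟨Fin.rev j, by rwa [Fin.rev_lt_rev], ?_⟩
        rw [hv, hv]
        rwa [Fin.rev_lt_rev]
    have dnrev : ∀ i, dn (Fin.rev i) ↔ up i := by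
      intro i
      rw [← uprev, Fin.rev_rev]
    let A : Fin (2 * n) → Prop := fun i => up i ∨ (¬ dn i ∧ (i : ℕ) < n)
    have hA : ∀ i, A (Fin.rev i) ↔ ¬ A i := by
      intro i
      have h1 : ((Fin.rev i : Fin (2 * n)) : ℕ) < n ↔ ¬ (i : ℕ) < n := by
        rw [Fin.val_rev]; have := i.2; omega
      have := updn i
      simp only [A, uprev, dnrev, h1]
      have aux : ∀ p q r : Prop, (p → ¬ q) → ((q ∨ ¬ p ∧ ¬ r) ↔ ¬ (p ∨ ¬ q ∧ r)) := by
        intro p q r; tauto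
      exact aux _ _ _ this
    obtain ⟨r, hr, hlt, hrn⟩ := exists_shuffle A hA
    have hAd : ∀ i, A i → ¬ dn i := by
      intro i h
      rcases h with h | h
      · exact updn i h
      · exact h.1
    have hAu : ∀ i, ¬ A i → ¬ up i := fun i h h' => h (Or.inl h')
    have hinv : ∀ i j, i < j → (A j ∨ ¬ A i) → v j < v i := by
      intro i j hij h
      rcases lt_trichotomy (v i) (v j) with h' | h' | h'
      · rcases h with h | h
        · exact absurd ⟨i, hij, h'⟩ (hAd j h)
        · exact absurd ⟨j, hij, h'⟩ (hAu i h)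
      · exact absurd (v.injective h') hij.ne
      · exact h'
    have e : v = v * r⁻¹ * vsq⁻¹ * (vsq * r) := by group
    refine ⟨v * r⁻¹ * vsq⁻¹, r, (hv.mul hr.inv).mul hsq.inv, hr, by group, ?_⟩
    have c2 : L (vsq * r) = L vsq + L r := by
      rw [L_add_iff _ _ hr]
      intro i j hij h
      have h0 := (hlt j i).1 h
      rcases h0 with ⟨h1, h2⟩ | ⟨_, h2⟩
      · rw [Equiv.Perm.mul_apply, Equiv.Perm.mul_apply, Fin.lt_def, hvsq, hvsq,
          if_pos ((hrn j).2 h1), if_neg (fun h => h2 ((hrn i).1 h))]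
        have := (r i).2
        have := (hrn j).2 h1
        omega
      · exact absurd hij (not_lt_of_gt h2)
    have c1 : L v = L (v * r⁻¹ * vsq⁻¹) + L (vsq * r) := by
      have := (L_add_iff (v * r⁻¹ * vsq⁻¹) (vsq * r) (hsq.mul hr)).2
      rw [← e] at this
      apply this
      intro i j hij h
      apply hinv i j hij
      by_contra hcon
      push Not at hcon
      have h1 := (hrn i).2 hcon.2
      have h2 : ¬ (r j : ℕ) < n := fun h => hcon.1 ((hrn j).1 h)
      rw [Equiv.Perm.mul_apply, Equiv.Perm.mul_apply, Fin.lt_def, hvsq, hvsq,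
          if_pos h1, if_neg h2] at h
      exact aux_arith h1 h2 (r j).2 h
    omega

end TypeC

/-- For `v` in the type-C Weyl group
`C_n = {v ∈ S_{2n} : v(2n+1-i) = 2n+1-v(i)}`, with simple generators
`c 0 = s_n` and `c i = s_{n-i} s_{n+i}` (`1 ≤ i ≤ n-1`), and `ℓC` the word
length with respect to these generators, and `v_□` the square-word permutation:
`v` admits a factorization `v = u_l · v_□ · u_r` with `u_l, u_r ∈ C_n` and
`ℓC v = ℓC u_l + ℓC v_□ + ℓC u_r` (i.e. `v ≥ v_□` in left-right weak order)
if and only if `v` is 123-avoiding as an element of `S_{2n}`. -/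
theorem stmt16 (n : ℕ) (hn : 1 ≤ n)
    (c : ℕ → Equiv.Perm (Fin (2 * n)))
    (hc0 : c 0 = Equiv.swap ⟨n - 1, by omega⟩ ⟨n, by omega⟩)
    (hci : ∀ i (h1 : 1 ≤ i) (h2 : i < n),
      c i = Equiv.swap ⟨n - i - 1, by omega⟩ ⟨n - i, by omega⟩ *
            Equiv.swap ⟨n + i - 1, by omega⟩ ⟨n + i, by omega⟩)
    (ℓC : Equiv.Perm (Fin (2 * n)) → ℕ)
    (hℓ : ∀ u, ℓC u = sInf {m | ∃ l : List (Equiv.Perm (Fin (2 * n))),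
        l.length = m ∧ (∀ x ∈ l, ∃ i < n, x = c i) ∧ l.prod = u})
    (vsq : Equiv.Perm (Fin (2 * n)))
    (hvsq : ∀ i : Fin (2 * n), ((vsq i : ℕ)) =
        if (i : ℕ) < n then n - 1 - (i : ℕ) else 3 * n - 1 - (i : ℕ))
    (v : Equiv.Perm (Fin (2 * n)))
    (hv : ∀ i, v (Fin.rev i) = Fin.rev (v i)) :
    (∃ ul ur : Equiv.Perm (Fin (2 * n)),
        (∀ i, ul (Fin.rev i) = Fin.rev (ul i)) ∧
        (∀ i, ur (Fin.rev i) = Fin.rev (ur i)) ∧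
        v = ul * vsq * ur ∧
        ℓC v = ℓC ul + ℓC vsq + ℓC ur) ↔
      ¬ ∃ i j k : Fin (2 * n), i < j ∧ j < k ∧ v i < v j ∧ v j < v k := by
  have hc := TypeC.isGen hn (fun _ _ => hc0) (fun i h1 h2 _ _ _ _ => hci i h1 h2)
  have hlen : ∀ u, TypeC.Sy u → 2 * ℓC u = TypeC.L u := by
    intro u hu
    rw [hℓ]
    exact TypeC.len_eq hc u hu
  have hsq : TypeC.Sy vsq := by
    intro i
    ext
    have := i.2
    rw [Fin.val_rev, hvsq, hvsq, Fin.val_rev]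
    split_ifs <;> omega
  rw [← TypeC.main vsq hvsq v hv]
  constructor
  · rintro ⟨ul, ur, hl, hr, he, hL⟩
    refine ⟨ul, ur, hl, hr, he, ?_⟩
    rw [← hlen v hv, ← hlen ul hl, ← hlen ur hr, ← hlen vsq hsq]
    omega
  · rintro ⟨ul, ur, hl, hr, he, hL⟩
    refine ⟨ul, ur, hl, hr, he, ?_⟩
    rw [← hlen v hv, ← hlen ul hl, ← hlen ur hr, ← hlen vsq hsq] at hL
    omega
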